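/- arXiv:math/9807165 — 2 statements merged into one kernel-verified Lean document; each statement's English description precedes it below -/
import Mathlib

section
/- For every digraph D, the leafage is at least the disjoint Ferrers dimension: l(D) ≥ f*(D). In particular, if D has a subtree representation in a host tree with k ≥ 3 leaves, then the complement of D in V × V is the union of k pairwise edge-disjoint Ferrers digraphs. -/
/-- A subtree representation of a digraph with edge relation `E` on vertex type `V`
in a host graph `T` on vertex type `W`: each digraph vertex `v` gets a source set
`src v` and a sink set `snk v`, each inducing a connected (hence nonempty) subgraph
of `T`, such that `E u v` holds iff `src u` meets `snk v`. -/
structure SubtreeRep {V W : Type} (E : V → V → Prop) (T : SimpleGraph W) where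
  src : V → Set W
  snk : V → Set W
  src_connected : ∀ v, (T.induce (src v)).Connected
  snk_connected : ∀ v, (T.induce (snk v)).Connected
  rep : ∀ u v, E u v ↔ (src u ∩ snk v).Nonempty

/-- The set of leaves (vertices of degree 1) of a graph. -/
def treeLeaves {W : Type} (T : SimpleGraph W) : Set W :=
  {w | (T.neighborSet w).ncard = 1}

/-- The leafage of a digraph: the minimum number of leaves of a finite host tree in
which the digraph has a subtree representation. -/
noncomputable def digLeafage {V : Type} (E : V → V → Prop) : ℕ :=
  sInf {k | ∃ (W : Type) (_ : Fintype W) (T : SimpleGraph W),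
    T.IsTree ∧ Nonempty (SubtreeRep E T) ∧ (treeLeaves T).ncard = k}

/-- The catch leafage of a digraph: the minimum number of leaves of a finite host tree
in which the digraph has a subtree representation all of whose sink sets are single
vertices. -/
noncomputable def catchLeafage {V : Type} (E : V → V → Prop) : ℕ :=
  sInf {k | ∃ (W : Type) (_ : Fintype W) (T : SimpleGraph W) (R : SubtreeRep E T),
    T.IsTree ∧ (∀ v, ∃ x, R.snk v = {x}) ∧ (treeLeaves T).ncard = k}

/-- `C` is between `A` and `B` in `T`: `A` and `B` are disjoint and the unique path of
`T` from `A` to `B` (i.e. the path meeting `A` only at its first vertex and `B` only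
at its last vertex) contains a vertex of `C` (possibly an endpoint). -/
def Between {W : Type} (T : SimpleGraph W) (A B C : Set W) : Prop :=
  A ∩ B = ∅ ∧ ∃ (a b : W) (p : T.Walk a b), a ∈ A ∧ b ∈ B ∧ p.IsPath ∧
    (∀ x ∈ p.support, x ∈ A → x = a) ∧ (∀ x ∈ p.support, x ∈ B → x = b) ∧
    ∃ x ∈ C, x ∈ p.support

/-- An asteroidal collection of sets in `T`: pairwise disjoint, and no member is
between two other members. -/
def Asteroidal {W ι : Type} (T : SimpleGraph W) (F : ι → Set W) : Prop :=
  (∀ i j, i ≠ j → F i ∩ F j = ∅) ∧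
  ∀ i j k, i ≠ j → i ≠ k → j ≠ k → ¬ Between T (F i) (F j) (F k)

/-- The star `K_{1,n}`: the center `none` is adjacent to the `n` leaves `some i`. -/
def starGraph (n : ℕ) : SimpleGraph (Option (Fin n)) :=
  SimpleGraph.fromRel (fun a _ => a = none)

/-- A Ferrers digraph: the successor sets are linearly ordered by inclusion. -/
def IsFerrers {V : Type} (F : V → V → Prop) : Prop :=
  ∀ u u' : V, {v | F u v} ⊆ {v | F u' v} ∨ {v | F u' v} ⊆ {v | F u v}

/-- The Ferrers dimension `f(D)`: the minimum number of Ferrers digraphs whose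
intersection is `E`. -/
noncomputable def ferrersDim {V : Type} (E : V → V → Prop) : ℕ :=
  sInf {k | ∃ F : Fin k → V → V → Prop,
    (∀ i, IsFerrers (F i)) ∧ (∀ u v, E u v ↔ ∀ i, F i u v)}

/-- `f*(D)`: the minimum number of pairwise edge-disjoint Ferrers digraphs whose
union is the complement of `E` in `V × V`. -/
noncomputable def fstar {V : Type} (E : V → V → Prop) : ℕ :=
  sInf {k | ∃ F : Fin k → V → V → Prop,
    (∀ i, IsFerrers (F i)) ∧
    (∀ i j, i ≠ j → ∀ u v, ¬ (F i u v ∧ F j u v)) ∧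
    (∀ u v, ¬ E u v ↔ ∃ i, F i u v)}

/-- The width of the incidence poset `P(D)`: the maximum size of an antichain (under
inclusion) of predecessor sets of the digraph `E`. -/
noncomputable def incWidth {V : Type} (E : V → V → Prop) : ℕ :=
  sSup {k | ∃ A : Finset (Set V),
    (↑A : Set (Set V)) ⊆ Set.range (fun v => {u | E u v}) ∧
    IsAntichain (· ⊆ ·) (↑A : Set (Set V)) ∧ A.card = k}

/-- The digraph `D_n` with adjacency matrix `J - I`: all pairs of distinct vertices. -/
def DnRel (n : ℕ) (i j : Fin n) : Prop := i ≠ j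

/-- The digraph `E_n` with adjacency matrix `[[I, Y], [Yᵀ, 0]]` (vertex `n-1` playing
the role of the last row/column). -/
def EnRel (n : ℕ) (i j : Fin n) : Prop :=
  (i.val < n - 1 ∧ j.val < n - 1 ∧ i = j) ∨
  (i.val < n - 1 ∧ j.val = n - 1) ∨
  (i.val = n - 1 ∧ j.val < n - 1)

/-- The digraph `C_n`: a directed `n`-cycle plus a loop at each vertex. -/
def CnRel (n : ℕ) (i j : Fin n) : Prop := j = i ∨ j.val = (i.val + 1) % n

/-- The digraph `M_{k,m}` on `Fin k × Fin m`: identity diagonal blocks, all-ones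
blocks above the diagonal, all-zeros blocks below. -/
def MkmRel (k m : ℕ) (p q : Fin k × Fin m) : Prop :=
  p.1 < q.1 ∨ (p.1 = q.1 ∧ p.2 = q.2)

/-- The digraph `F_n` with adjacency matrix `[[I, Y], [Yᵀ, 1]]` (vertex `n-1` playing
the role of the last row/column). -/
def FnRel (n : ℕ) (i j : Fin n) : Prop := i = j ∨ i.val = n - 1 ∨ j.val = n - 1

/-- The digraph `P_n`: a directed path `1 → 2 → ⋯ → n` plus a loop at each vertex. -/
def PnRel (n : ℕ) (i j : Fin n) : Prop := j = i ∨ j.val = i.val + 1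

/-!
Let `T` be a finite host tree. The sink set `T_v` is disjoint from the source set `S_u` exactly
when it lies in a component of `T - S_u`, and every such component is one side of an edge of `T`.
Fix a permutation `σ` that moves all leaves of `T` in a single cycle. A side `B` of an edge contains
some leaf but not all of them, so some leaf `w ∈ B` has `σ w ∉ B`; label `B` by such a `w`. Two
sides with the same label `w` share `w` and both miss `σ w`, so in a tree they are nested. Hence the
non-edges `(u, v)` of `D` whose component of `T - S_u` has label `w` form a Ferrers digraph, one for
each leaf.
-/

section BondSides

variable {W : Type*} {G : SimpleGraph W} {B C K S X : Set W}

/-- `B` is one side of a bond of `G`: both `B` and its complement induce connected subgraphs. In a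
tree these are the two vertex sets obtained by deleting an edge. -/
structure IsBondSide (G : SimpleGraph W) (B : Set W) : Prop where
  connected : (G.induce B).Connected
  connected_compl : (G.induce Bᶜ).Connected

theorem exists_adj_mem_notMem_of_connected_induce (hC : (G.induce C).Connected) {x y : W}
    (hxC : x ∈ C) (hyC : y ∈ C) (hx : x ∈ X) (hy : y ∉ X) :
    ∃ a ∈ C, ∃ b ∈ C, a ∈ X ∧ b ∉ X ∧ G.Adj a b := by
  obtain ⟨p⟩ := hC.preconnected ⟨x, hxC⟩ ⟨y, hyC⟩
  obtain ⟨d, -, hfst, hsnd⟩ := p.exists_boundary_dart (Subtype.val ⁻¹' X) hx hy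
  exact ⟨d.fst, d.fst.2, d.snd, d.snd.2, hfst, hsnd, d.adj⟩

theorem reachable_deleteEdges_of_connected_induce (hC : (G.induce C).Connected) {e : Sym2 W}
    {b x y : W} (hbe : b ∈ e) (hb : b ∉ C) (hx : x ∈ C) (hy : y ∈ C) :
    (G.deleteEdges {e}).Reachable x y := by
  let inclusion : G.induce C →g G.deleteEdges {e} :=
    { toFun := Subtype.val
      map_rel' := fun {u v} huv => SimpleGraph.deleteEdges_adj.2 ⟨huv, by
        rintro rfl
        rcases Sym2.mem_iff.1 hbe with rfl | rfl
        exacts [hb u.2, hb v.2]⟩ }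
  exact (hC.preconnected ⟨x, hx⟩ ⟨y, hy⟩).map inclusion

namespace IsBondSide

theorem boundary_edge_unique (hG : G.IsAcyclic) (hB : IsBondSide G B) {a b c d : W}
    (ha : a ∈ B) (hb : b ∉ B) (hab : G.Adj a b) (hc : c ∈ B) (hd : d ∉ B) (hcd : G.Adj c d) :
    a = c ∧ b = d := by
  by_contra hne
  have hbridge : ¬ (G.deleteEdges {s(a, b)}).Reachable a b :=
    SimpleGraph.isAcyclic_iff_forall_adj_isBridge.1 hG hab
  have hac : (G.deleteEdges {s(a, b)}).Reachable a c :=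
    reachable_deleteEdges_of_connected_induce hB.connected (Sym2.mem_mk_right a b) hb ha hc
  have hdb : (G.deleteEdges {s(a, b)}).Reachable d b :=
    reachable_deleteEdges_of_connected_induce hB.connected_compl (Sym2.mem_mk_left a b)
      (not_not_intro ha) hd hb
  have hcd' : (G.deleteEdges {s(a, b)}).Adj c d := by
    refine SimpleGraph.deleteEdges_adj.2 ⟨hcd, fun hedge => ?_⟩
    rcases Sym2.eq_iff.1 hedge with ⟨rfl, rfl⟩ | ⟨rfl, rfl⟩
    exacts [hne ⟨rfl, rfl⟩, hb hc]
  exact hbridge (hac.trans (hcd'.reachable.trans hdb))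

theorem subset_or_subset (hG : G.IsAcyclic) (hB : IsBondSide G B) (hC : IsBondSide G C)
    {x y : W} (hxB : x ∈ B) (hxC : x ∈ C) (hyB : y ∉ B) (hyC : y ∉ C) : B ⊆ C ∨ C ⊆ B := by
  by_contra! hcross
  obtain ⟨p, hpB, hpC⟩ := Set.not_subset.1 hcross.1
  obtain ⟨q, hqC, hqB⟩ := Set.not_subset.1 hcross.2
  -- `B` has a boundary edge inside `C` and another one inside `Cᶜ`.
  obtain ⟨a, haC, b, -, ha, hb, hab⟩ :=
    exists_adj_mem_notMem_of_connected_induce hC.connected hxC hqC hxB hqB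
  obtain ⟨c, hcC, d, -, hc, hd, hcd⟩ :=
    exists_adj_mem_notMem_of_connected_induce hC.connected_compl hpC hyC hpB hyB
  obtain ⟨rfl, -⟩ := hB.boundary_edge_unique hG ha hb hab hc hd hcd
  exact hcC haC

theorem exists_boundary_edge (hG : G.Connected) (hB : IsBondSide G B) :
    ∃ b ∈ B, ∃ a ∉ B, G.Adj b a := by
  obtain ⟨x, hx⟩ := hB.connected.nonempty
  obtain ⟨y, hy⟩ := hB.connected_compl.nonempty
  obtain ⟨p⟩ := hG.preconnected x y
  obtain ⟨d, -, hfst, hsnd⟩ := p.exists_boundary_dart B hx hy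
  exact ⟨d.fst, hfst, d.snd, hsnd, d.adj⟩

theorem compl (hB : IsBondSide G B) : IsBondSide G Bᶜ :=
  ⟨hB.connected_compl, (compl_compl B).symm ▸ hB.connected⟩

end IsBondSide

theorem connected_induce_componentCompl (C : G.ComponentCompl K) :
    (G.induce (C : Set W)).Connected := by
  let toInduce : C.toSimpleGraph →g G.induce (C : Set W) :=
    { toFun := fun x => ⟨x.1, x.1.2, x.2⟩
      map_rel' := id }
  exact C.connected_toSimpleGraph.map toInduce fun ⟨w, hwK, hw⟩ => ⟨⟨⟨w, hwK⟩, hw⟩, rfl⟩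

theorem connected_induce_union_componentCompl (hG : G.Preconnected)
    (hK : (G.induce K).Connected) (C : G.ComponentCompl K) :
    (G.induce (K ∪ C)).Connected := by
  obtain ⟨⟨c, k⟩, hc, hk, hck⟩ :=
    C.exists_adj_boundary_pair hG (Set.nonempty_coe_sort.1 hK.nonempty)
  exact SimpleGraph.connected_induce_union hK.preconnected
    (connected_induce_componentCompl C).preconnected hk hc hck.symm

theorem isBondSide_componentCompl (hG : G.Preconnected) (hK : (G.induce K).Connected)
    (C : G.ComponentCompl K) : IsBondSide G (C : Set W) := by
  refine ⟨connected_induce_componentCompl C, ?_⟩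
  obtain ⟨k, hk⟩ := hK.nonempty
  have hKC : K ⊆ (C : Set W)ᶜ := C.disjoint_right.subset_compl_right
  refine SimpleGraph.induce_connected_of_patches k (hKC hk) fun {w} hw => ?_
  by_cases hwK : w ∈ K
  · exact ⟨K, hKC, hk, hwK, hK.preconnected _ _⟩
  · have hne : G.componentComplMk hwK ≠ C := fun h => hw ⟨hwK, h⟩
    have hsub : K ∪ G.componentComplMk hwK ⊆ (C : Set W)ᶜ := Set.union_subset hKC
      (SimpleGraph.ComponentCompl.pairwise_disjoint hne).subset_compl_right
    exact ⟨_, hsub, Or.inl hk, Or.inr (G.componentComplMk_mem hwK),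
      (connected_induce_union_componentCompl hG hK _).preconnected _ _⟩

theorem exists_componentCompl_superset (hS : (G.induce S).Connected) (hSK : Disjoint K S) :
    ∃ C : G.ComponentCompl K, S ⊆ C := by
  have hSK' : S ⊆ Kᶜ := hSK.subset_compl_left
  obtain ⟨s, hs⟩ := hS.nonempty
  refine ⟨G.componentComplMk (hSK' hs), fun t ht => ⟨hSK' ht, ?_⟩⟩
  exact SimpleGraph.ConnectedComponent.eq.2
    ((hS.preconnected ⟨t, ht⟩ ⟨s, hs⟩).map (SimpleGraph.induceHomOfLE G hSK').toHom)

end BondSides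

section Leaves

variable {W : Type} {T : SimpleGraph W} {B : Set W}

theorem mem_treeLeaves_iff_existsUnique_adj {w : W} :
    w ∈ treeLeaves T ↔ ∃! x, T.Adj w x := by
  simp only [treeLeaves, Set.mem_ofPred_eq, Set.ncard_eq_one, Set.eq_singleton_iff_unique_mem,
    SimpleGraph.mem_neighborSet, ExistsUnique]

theorem IsBondSide.exists_mem_treeLeaves [Finite W] (hT : T.IsTree) (hB : IsBondSide T B) :
    ∃ w ∈ B, w ∈ treeLeaves T := by
  classical
  have := Fintype.ofFinite W
  obtain ⟨b, hb, a, ha, hba⟩ := hB.exists_boundary_edge hT.connected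
  have hboundary {x y : W} (hx : x ∈ B) (hy : y ∉ B) (hxy : T.Adj x y) : x = b ∧ y = a :=
    hB.boundary_edge_unique hT.isAcyclic hx hy hxy hb ha hba
  simp only [mem_treeLeaves_iff_existsUnique_adj]
  obtain hsub | hnontriv := B.subsingleton_or_nontrivial
  · exact ⟨b, hb, a, hba, fun y hby =>
      (hboundary hb (fun hy => hby.ne (hsub hb hy)) hby).2⟩
  · have := hnontriv.coe_sort
    have hTB : (T.induce B).IsTree := ⟨hB.connected, hT.isAcyclic.induce B⟩
    obtain ⟨w, hwb, hw⟩ : ∃ w : B, w.1 ≠ b ∧ (T.induce B).degree w = 1 := by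
      obtain ⟨u, v, huv, hu, hv⟩ := hTB.exists_ne_and_degree_eq_one
      by_cases hub : u.1 = b
      · exact ⟨v, fun hvb => huv (Subtype.ext (hub.trans hvb.symm)), hv⟩
      · exact ⟨u, hub, hu⟩
    obtain ⟨x, hwx, hx⟩ := SimpleGraph.degree_eq_one_iff_existsUnique_adj.1 hw
    refine ⟨w, w.2, x, hwx, fun y hwy => ?_⟩
    have hy : y ∈ B := by_contra fun hy => hwb (hboundary w.2 hy hwy).1
    exact congrArg Subtype.val (hx ⟨y, hy⟩ hwy)

theorem exists_mem_apply_notMem_of_isCycleOn {α : Type*} {σ : Equiv.Perm α} {s X : Set α}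
    (hs : s.Finite) (hσ : σ.IsCycleOn s) {x y : α} (hxs : x ∈ s) (hys : y ∈ s)
    (hx : x ∈ X) (hy : y ∉ X) : ∃ z ∈ s, z ∈ X ∧ σ z ∉ X := by
  by_contra! hmaps
  have hinv : Set.MapsTo σ (s ∩ X) (s ∩ X) := fun z hz =>
    ⟨hσ.1.mapsTo hz.1, hmaps z hz.1 hz.2⟩
  obtain ⟨n, rfl⟩ := hσ.exists_pow_eq' hs hxs hys
  rw [← Equiv.Perm.iterate_eq_pow] at hy
  exact hy (hinv.iterate n ⟨hxs, hx⟩).2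

theorem exists_leaf_labelling_bondSides [Finite W] (hT : T.IsTree) :
    ∃ c : Set W → W, (∀ B, IsBondSide T B → c B ∈ treeLeaves T) ∧
      ∀ B C, IsBondSide T B → IsBondSide T C → c B = c C → B ⊆ C ∨ C ⊆ B := by
  have := hT.connected.nonempty
  obtain ⟨σ, hσ, -⟩ := (treeLeaves T).toFinite.countable.exists_cycleOn
  have hexit (B : Set W) (hB : IsBondSide T B) : ∃ w ∈ treeLeaves T, w ∈ B ∧ σ w ∉ B := by
    obtain ⟨x, hxB, hx⟩ := hB.exists_mem_treeLeaves hT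
    obtain ⟨y, hyB, hy⟩ := hB.compl.exists_mem_treeLeaves hT
    exact exists_mem_apply_notMem_of_isCycleOn (Set.toFinite _) hσ hx hy hxB hyB
  choose! c hleaf hmem hnotMem using hexit
  exact ⟨c, hleaf, fun B C hB hC hBC => hB.subset_or_subset hT.isAcyclic hC
    (hmem B hB) (hBC ▸ hmem C hC) (hnotMem B hB) (hBC ▸ hnotMem C hC)⟩

end Leaves

section FerrersPartitions

variable {V : Type} {ι κ : Type*} {A : V → V → Prop}

/-- `F` is a decomposition of the edge relation `A` into pairwise edge-disjoint Ferrers digraphs,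
some of which may be empty. -/
structure IsFerrersPartition (F : ι → V → V → Prop) (A : V → V → Prop) : Prop where
  isFerrers : ∀ i, IsFerrers (F i)
  disjoint : ∀ i j, i ≠ j → ∀ u v, ¬ (F i u v ∧ F j u v)
  cover : ∀ u v, A u v ↔ ∃ i, F i u v

theorem IsFerrersPartition.comp_equiv {F : ι → V → V → Prop} (hF : IsFerrersPartition F A)
    (e : κ ≃ ι) : IsFerrersPartition (F ∘ e) A where
  isFerrers i := hF.isFerrers (e i)
  disjoint i j hij := hF.disjoint (e i) (e j) (e.injective.ne hij)
  cover u v := (hF.cover u v).trans e.surjective.exists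

end FerrersPartitions

section SubtreeRepresentations

variable {V W : Type} {ι : Type*} {E : V → V → Prop} {T : SimpleGraph W}

namespace SubtreeRep

/-- Given labels `c` on vertex sets of the host graph, the digraph of the pairs `(u, v)` for which
the component of `T - S_u` containing `T_v` exists and has label `i`. -/
def labelClass (R : SubtreeRep E T) (c : Set W → ι) (i : ι) (u v : V) : Prop :=
  ∃ C : T.ComponentCompl (R.src u), c C = i ∧ R.snk v ⊆ C

theorem isBondSide_componentCompl_src (R : SubtreeRep E T) (hT : T.Connected) {u : V}
    (C : T.ComponentCompl (R.src u)) : IsBondSide T (C : Set W) :=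
  isBondSide_componentCompl hT.preconnected (R.src_connected u) C

theorem isFerrers_labelClass (R : SubtreeRep E T) (hT : T.Connected) {c : Set W → ι}
    (hc : ∀ B C, IsBondSide T B → IsBondSide T C → c B = c C → B ⊆ C ∨ C ⊆ B) (i : ι) :
    IsFerrers (R.labelClass c i) := by
  intro u u'
  by_contra! hcross
  obtain ⟨v, ⟨C, hC, hvC⟩, hv⟩ := Set.not_subset.1 hcross.1
  obtain ⟨v', ⟨D, hD, hvD⟩, hv'⟩ := Set.not_subset.1 hcross.2
  obtain hCD | hDC := hc C D (R.isBondSide_componentCompl_src hT C)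
    (R.isBondSide_componentCompl_src hT D) (hC.trans hD.symm)
  · exact hv ⟨D, hD, hvC.trans hCD⟩
  · exact hv' ⟨C, hC, hvD.trans hDC⟩

theorem labelClass_unique (R : SubtreeRep E T) {c : Set W → ι} {i j : ι} {u v : V}
    (hi : R.labelClass c i u v) (hj : R.labelClass c j u v) : i = j := by
  obtain ⟨C, rfl, hvC⟩ := hi
  obtain ⟨D, rfl, hvD⟩ := hj
  obtain ⟨t, ht⟩ := (R.snk_connected v).nonempty
  have hCD : C = D := by_contra fun hne => Set.disjoint_left.1
    (SimpleGraph.ComponentCompl.pairwise_disjoint hne) (hvC ht) (hvD ht)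
  rw [hCD]

theorem not_rel_iff_exists_snk_subset (R : SubtreeRep E T) {u v : V} :
    ¬ E u v ↔ ∃ C : T.ComponentCompl (R.src u), R.snk v ⊆ C := by
  rw [R.rep u v, ← Set.not_disjoint_iff_nonempty_inter, not_not]
  exact ⟨exists_componentCompl_superset (R.snk_connected v),
    fun ⟨C, hC⟩ => C.disjoint_right.mono_right hC⟩

theorem isFerrersPartition_labelClass (R : SubtreeRep E T) (hT : T.Connected) {c : Set W → ι}
    {L : Set ι} (hL : ∀ B, IsBondSide T B → c B ∈ L)
    (hc : ∀ B C, IsBondSide T B → IsBondSide T C → c B = c C → B ⊆ C ∨ C ⊆ B) :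
    IsFerrersPartition (fun i : L => R.labelClass c i) (fun u v => ¬ E u v) where
  isFerrers i := R.isFerrers_labelClass hT hc i
  disjoint _ _ hij _ _ h := hij (Subtype.ext (R.labelClass_unique h.1 h.2))
  cover _ _ := R.not_rel_iff_exists_snk_subset.trans
    ⟨fun ⟨C, hC⟩ => ⟨⟨c C, hL C (R.isBondSide_componentCompl_src hT C)⟩, C, rfl, hC⟩,
      fun ⟨_, C, _, hC⟩ => ⟨C, hC⟩⟩

theorem exists_isFerrersPartition [Finite W] (R : SubtreeRep E T) (hT : T.IsTree) :
    ∃ F : Fin (treeLeaves T).ncard → V → V → Prop,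
      IsFerrersPartition F (fun u v => ¬ E u v) := by
  obtain ⟨c, hleaf, hchain⟩ := exists_leaf_labelling_bondSides hT
  exact ⟨_, (R.isFerrersPartition_labelClass hT.connected hleaf hchain).comp_equiv
    (Finite.equivFin (treeLeaves T)).symm⟩

end SubtreeRep

theorem connected_induce_starGraph {α : Type*} {r : α} {s : Set α} (hr : r ∈ s) :
    ((SimpleGraph.starGraph r).induce s).Connected :=
  .of_isUniversal (v := ⟨r, hr⟩) fun _ hne =>
    SimpleGraph.starGraph_center_adj fun h => hne (Subtype.ext h)

theorem nonempty_subtreeRep_starGraph (E : V → V → Prop) :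
    Nonempty (SubtreeRep E (SimpleGraph.starGraph (none : Option V))) :=
  ⟨{ src := fun u => insert none (some '' {v | E u v})
     snk := fun v => {some v}
     src_connected := fun u => connected_induce_starGraph (Set.mem_insert _ _)
     snk_connected := fun v => .of_subsingleton
     rep := fun u v => by simp }⟩

theorem exists_isTree_ncard_treeLeaves_eq_digLeafage [Finite V] (E : V → V → Prop) :
    ∃ (W : Type) (_ : Fintype W) (T : SimpleGraph W),
      T.IsTree ∧ Nonempty (SubtreeRep E T) ∧ (treeLeaves T).ncard = digLeafage E := by
  have := Fintype.ofFinite V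
  have hne : {k | ∃ (W : Type) (_ : Fintype W) (T : SimpleGraph W),
      T.IsTree ∧ Nonempty (SubtreeRep E T) ∧ (treeLeaves T).ncard = k}.Nonempty :=
    ⟨_, Option V, inferInstance, SimpleGraph.starGraph none,
      SimpleGraph.isTree_starGraph none, nonempty_subtreeRep_starGraph E, rfl⟩
  exact Nat.sInf_mem hne

end SubtreeRepresentations

/-- For every digraph `D`, `l(D) ≥ f*(D)`; in particular, whenever `D`
has a subtree representation in a host tree with `k ≥ 3` leaves, the complement of
`D` is the union of `k` pairwise edge-disjoint Ferrers digraphs. -/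
theorem stmt_6 {V : Type} [Fintype V] (E : V → V → Prop) :
    fstar E ≤ digLeafage E ∧
    ∀ (k : ℕ) (W : Type) (_ : Fintype W) (T : SimpleGraph W),
      T.IsTree → Nonempty (SubtreeRep E T) → 3 ≤ k → (treeLeaves T).ncard = k →
      ∃ F : Fin k → V → V → Prop,
        (∀ i, IsFerrers (F i)) ∧
        (∀ i j, i ≠ j → ∀ u v, ¬ (F i u v ∧ F j u v)) ∧
        (∀ u v, ¬ E u v ↔ ∃ i, F i u v) := by
  constructor
  · obtain ⟨W, _, T, hT, ⟨R⟩, hk⟩ := exists_isTree_ncard_treeLeaves_eq_digLeafage E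
    obtain ⟨F, hF⟩ := R.exists_isFerrersPartition hT
    rw [← hk]
    exact Nat.sInf_le ⟨F, hF.isFerrers, hF.disjoint, hF.cover⟩
  · rintro _ W _ T hT ⟨R⟩ - rfl
    obtain ⟨F, hF⟩ := R.exists_isFerrersPartition hT
    exact ⟨F, hF.isFerrers, hF.disjoint, hF.cover⟩
end

section
/- For n ≥ 3, let C_n be the digraph on vertices {1, …, n} consisting of the directed cycle 1→2→⋯→n→1 together with a loop at each vertex, i.e., (i,j) ∈ E(C_n) iff j = i or j ≡ i+1 (mod n). Then the leafage satisfies l(C_n) = n, while f(C_n) = f*(C_n) = 3. -/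
/-!
Subtrees of a tree have the Helly property. In a representation of `C_n` the sink and source sets,
listed as `snk 0, src 0, snk 1, src 1, …`, form a cycle of `2n` subtrees in which subtrees of
opposite parity meet only when they are consecutive. Applied to two consecutive subtrees and the
union of all the others, the Helly property makes one of the two meet the subtree two steps further
on. Such contacts propagate, so the subtrees of one parity form a closed chain, and then those of
the other parity are pairwise disjoint: a contact would have to be two steps long in both
directions around the cycle. Choose a point in each of these `n` disjoint subtrees. For each of the
points, the other `n - 1` lie together in a subtree avoiding it, so behind each point there is a
leaf of its own.

For the Ferrers dimension of a digraph `E`, two non-edges `(u, v)` and `(u', v')` such that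
`(u, v')` and `(u', v)` are edges cannot both be avoided by one Ferrers digraph containing `E`. A
family of Ferrers digraphs with intersection `E` therefore colours the graph of these conflicts,
which for `C_n` has an odd cycle.
-/

section Subtrees

variable {W : Type*} {T : SimpleGraph W} {A B C : Set W}

lemma exists_isPath_support_subset {x y : W} (hA : (T.induce A).Preconnected)
    (hx : x ∈ A) (hy : y ∈ A) : ∃ p : T.Walk x y, p.IsPath ∧ ∀ w ∈ p.support, w ∈ A := by
  obtain ⟨p, hp⟩ := (hA ⟨x, hx⟩ ⟨y, hy⟩).exists_isPath
  refine ⟨p.map (SimpleGraph.Embedding.induce A).toHom,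
    hp.map Subtype.val_injective, fun w hw => ?_⟩
  obtain ⟨v, -, rfl⟩ := List.mem_map.mp (p.support_map _ ▸ hw)
  exact v.2

lemma support_subset_support_of_isAcyclic (hT : T.IsAcyclic) {x y : W} {p : T.Walk x y}
    (hp : p.IsPath) (q : T.Walk x y) : p.support ⊆ q.support := by
  classical
  rw [show p = q.bypass from congrArg Subtype.val
      ((hT.subsingleton_path x y).elim ⟨p, hp⟩ ⟨q.bypass, q.bypass_isPath⟩)]
  exact q.support_bypass_subset_support

theorem helly_of_isAcyclic (hT : T.IsAcyclic) (hA : (T.induce A).Preconnected)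
    (hB : (T.induce B).Preconnected) (hC : (T.induce C).Preconnected)
    (hAB : (A ∩ B).Nonempty) (hAC : (A ∩ C).Nonempty) (hBC : (B ∩ C).Nonempty) :
    (A ∩ B ∩ C).Nonempty := by
  obtain ⟨x, hxA, hxB⟩ := hAB
  obtain ⟨y, hyB, hyC⟩ := hBC
  obtain ⟨z, hzA, hzC⟩ := hAC
  by_cases hyA : y ∈ A
  · exact ⟨y, ⟨hyA, hyB⟩, hyC⟩
  obtain ⟨p, hp, hpB⟩ := exists_isPath_support_subset hB hxB hyB
  obtain ⟨q, -, hqA⟩ := exists_isPath_support_subset hA hxA hzA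
  obtain ⟨r, -, hrC⟩ := exists_isPath_support_subset hC hzC hyC
  have hpAC : ∀ w ∈ p.support, w ∈ A ∨ w ∈ C := fun w hw =>
    (SimpleGraph.Walk.mem_support_append_iff _ _).mp
      (support_subset_support_of_isAcyclic hT hp (q.append r) hw) |>.imp (hqA w) (hrC w)
  obtain ⟨⟨⟨u, v⟩, huv⟩, hd, huA, hvA⟩ := p.exists_boundary_dart A hxA hyA
  have hu := p.dart_fst_mem_support_of_mem_darts hd
  have hvC := (hpAC v (p.dart_snd_mem_support_of_mem_darts hd)).resolve_left hvA
  -- The bridge `uv` lies on every walk from `u` to `v`, in particular on one through `z`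
  -- inside `A ∪ C`.
  obtain ⟨q', -, hqA'⟩ := exists_isPath_support_subset hA huA hzA
  obtain ⟨r', -, hrC'⟩ := exists_isPath_support_subset hC hzC hvC
  have hbridge := SimpleGraph.isBridge_iff_forall_walk_mem_edges.mp
    (SimpleGraph.isAcyclic_iff_forall_adj_isBridge.mp hT huv) (q'.append r')
  rw [SimpleGraph.Walk.edges_append, List.mem_append] at hbridge
  rcases hbridge with he | he
  · exact absurd (hqA' v (q'.snd_mem_support_of_mem_edges he)) hvA
  · exact ⟨u, ⟨huA, hpB u hu⟩, hrC' u (r'.fst_mem_support_of_mem_edges he)⟩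

lemma connected_induce_iUnion_le {Y : ℕ → Set W} (hY : ∀ i, (T.induce (Y i)).Connected)
    (hmeet : ∀ i, (Y i ∩ Y (i + 1)).Nonempty) (d : ℕ) :
    (T.induce (⋃ i ≤ d, Y i)).Connected := by
  induction d with
  | zero =>
    rw [show ⋃ i ≤ 0, Y i = Y 0 by simp]
    exact hY 0
  | succ d ih =>
    rw [Set.biUnion_le_succ]
    exact SimpleGraph.induce_union_connected ih.preconnected (hY _).preconnected
      ((hmeet d).mono (Set.inter_subset_inter_left _
        (Set.subset_iUnion₂ (s := fun i _ => Y i) d le_rfl)))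

theorem exists_inter_chain_nonempty (hT : T.IsAcyclic) (hA : (T.induce A).Preconnected)
    (hB : (T.induce B).Preconnected) (hAB : (A ∩ B).Nonempty) {Y : ℕ → Set W}
    (hY : ∀ i, (T.induce (Y i)).Connected) (hmeet : ∀ i, (Y i ∩ Y (i + 1)).Nonempty) {i j d : ℕ}
    (hi : i ≤ d) (hAi : (A ∩ Y i).Nonempty) (hj : j ≤ d) (hBj : (B ∩ Y j).Nonempty) :
    ∃ m ≤ d, (A ∩ Y m).Nonempty ∧ (B ∩ Y m).Nonempty := by
  obtain ⟨x, ⟨hxA, hxB⟩, hxY⟩ := helly_of_isAcyclic hT hA hB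
    (connected_induce_iUnion_le hY hmeet d).preconnected hAB
    (hAi.mono (Set.inter_subset_inter_right _ (Set.subset_iUnion₂ (s := fun i _ => Y i) i hi)))
    (hBj.mono (Set.inter_subset_inter_right _ (Set.subset_iUnion₂ (s := fun i _ => Y i) j hj)))
  obtain ⟨m, hm, hxm⟩ := Set.mem_iUnion₂.mp hxY
  exact ⟨m, hm, ⟨x, hxA, hxm⟩, ⟨x, hxB, hxm⟩⟩

end Subtrees

section Leaves

variable {W : Type} [Finite W] {T : SimpleGraph W}

lemma exists_isPath_through_to_leaf (hT : T.IsTree) {c f : W} (hcf : f ≠ c) :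
    ∃ w ∈ treeLeaves T, ∃ p : T.Walk c w, p.IsPath ∧ f ∈ p.support := by
  choose P hP using fun w => (hT.connected c w).exists_isPath
  -- Among the vertices that `f` separates from `c`, one farthest from `c` is a leaf.
  obtain ⟨w, hfw, hmax⟩ := Set.exists_max_image {w | f ∈ (P w).support}
    (fun w => (P w).length) (Set.toFinite _) ⟨f, (P f).end_mem_support⟩
  replace hfw : f ∈ (P w).support := hfw
  refine ⟨w, Set.ncard_eq_one.mpr ⟨(P w).penultimate, Set.Subset.antisymm ?_ ?_⟩, P w, hP w, hfw⟩
  · intro v (hwv : T.Adj w v)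
    have hv : v ∈ (P w).support := by
      by_contra hv
      have hext : P v = (P w).concat hwv := congrArg Subtype.val
        ((hT.isAcyclic.subsingleton_path c v).elim ⟨P v, hP v⟩ ⟨_, (hP w).concat hv hwv⟩)
      have hle : (P v).length ≤ (P w).length :=
        hmax v (show f ∈ (P v).support from
          hext ▸ (P w).support_subset_support_concat hwv hfw)
      rw [hext, SimpleGraph.Walk.length_concat] at hle
      omega
    exact hT.isAcyclic.eq_penultimate_of_adj_end (hP w) hwv hv
  · rintro _ rfl
    refine ((P w).adj_penultimate fun hnil => hcf ?_).symm
    rw [SimpleGraph.Walk.nil_iff_support_eq.mp hnil] at hfw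
    exact List.mem_singleton.mp hfw

lemma exists_leaf_separated (hT : T.IsTree) {C : Set W} (hC : (T.induce C).Connected) {f : W}
    (hf : f ∉ C) : ∃ w ∈ treeLeaves T, ∀ x ∈ C, ∀ q : T.Walk w x, f ∈ q.support := by
  obtain ⟨⟨c, hc⟩⟩ := hC.nonempty
  obtain ⟨w, hw, p, hp, hfp⟩ := exists_isPath_through_to_leaf hT (ne_of_mem_of_not_mem hc hf).symm
  refine ⟨w, hw, fun x hx q => ?_⟩
  obtain ⟨r, -, hr⟩ := exists_isPath_support_subset hC.preconnected hx hc
  have hmem := support_subset_support_of_isAcyclic hT.isAcyclic hp.reverse (q.append r)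
    (by simpa using hfp)
  exact ((SimpleGraph.Walk.mem_support_append_iff _ _).mp hmem).resolve_right
    fun h => hf (hr f h)

theorem card_le_ncard_treeLeaves (hT : T.IsTree) {ι : Type*} {f : ι → W} {C : ι → Set W}
    (hC : ∀ i, (T.induce (C i)).Connected) (hf : ∀ i, f i ∉ C i)
    (hfC : ∀ i j, i ≠ j → f j ∈ C i) : Nat.card ι ≤ (treeLeaves T).ncard := by
  classical
  choose leaf hleaf hsep using fun i => exists_leaf_separated hT (hC i) (hf i)
  have hinj : Function.Injective leaf := by
    intro i j hij
    by_contra hne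
    -- On the path from a common leaf to `f i`, each of `f i` and `f j` would precede the other.
    obtain ⟨p, hp⟩ := (hT.connected (leaf i) (f i)).exists_isPath
    have hj : f j ∈ p.support := by
      simpa using hsep j (f i) (hfC j i (Ne.symm hne)) (p.copy hij rfl)
    have hfne : f i ≠ f j := (ne_of_mem_of_not_mem (hfC i j hne) (hf i)).symm
    exact SimpleGraph.Walk.endpoint_notMem_support_takeUntil hp hj hfne
      (hsep i (f j) (hfC i j hne) (p.takeUntil (f j) hj))
  rw [← Set.ncard_range_of_injective hinj]
  exact Set.ncard_le_ncard (Set.range_subset_iff.mpr hleaf) (Set.toFinite _)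

end Leaves

/-- A cyclic list of `2 * n` subtrees of `T`, extended periodically to all indices, in which
subtrees whose indices have opposite parity meet exactly when they are neighbours in the cyclic
order. Nothing is required of subtrees whose indices have equal parity. -/
structure IsBipartiteCycle {W : Type*} (T : SimpleGraph W) (n : ℕ) (X : ℕ → Set W) : Prop where
  connected : ∀ k, (T.induce (X k)).Connected
  periodic : Function.Periodic X (2 * n)
  meet : ∀ k, (X k ∩ X (k + 1)).Nonempty
  disjoint : ∀ p q, Odd (p + q) → p + 1 < q → q + 1 < p + 2 * n → Disjoint (X p) (X q)

namespace IsBipartiteCycle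

variable {W : Type*} {T : SimpleGraph W} {n : ℕ} {X : ℕ → Set W}

lemma eq_or_eq_of_inter_nonempty (hX : IsBipartiteCycle T n X) {p q : ℕ} (hodd : Odd (p + q))
    (hpq : p < q) (hqp : q < p + 2 * n) (hmeet : (X p ∩ X q).Nonempty) :
    q = p + 1 ∨ q + 1 = p + 2 * n := by
  by_contra! h
  exact Set.not_disjoint_iff_nonempty_inter.mpr hmeet
    (hX.disjoint p q hodd (by omega) (by omega))

/-- Helly's theorem for `X k`, `X (k + 1)` and the union of `X (k + 2), …, X (k + 2 + d)`. -/
lemma exists_inter_of_inter_nonempty (hX : IsBipartiteCycle T n X) (hT : T.IsAcyclic) {k d : ℕ}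
    (h : (X k ∩ X (k + 2 + d)).Nonempty) :
    ∃ i ≤ d, (X k ∩ X (k + 2 + i)).Nonempty ∧ (X (k + 1) ∩ X (k + 2 + i)).Nonempty :=
  exists_inter_chain_nonempty hT (hX.connected _).preconnected (hX.connected _).preconnected
    (hX.meet k) (fun _ => hX.connected _) (fun i => hX.meet (k + 2 + i)) le_rfl h d.zero_le
    (hX.meet (k + 1))

lemma inter_add_two_nonempty_or (hX : IsBipartiteCycle T n X) (hn : 2 ≤ n) (hT : T.IsAcyclic) :
    (X 0 ∩ X 2).Nonempty ∨ (X 1 ∩ X 3).Nonempty := by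
  obtain ⟨i, hi, h1, h2⟩ := hX.exists_inter_of_inter_nonempty hT (k := 1) (d := 2 * n - 3) (by
    rw [show 1 + 2 + (2 * n - 3) = 0 + 2 * n by omega, hX.periodic, Set.inter_comm]
    exact hX.meet 0)
  rcases Nat.even_or_odd i with he | ho
  · rcases hX.eq_or_eq_of_inter_nonempty (by grind) (by omega) (by omega) h2 with h | h
    · exact Or.inr (by rwa [show i = 0 by omega] at h1)
    · omega
  · rcases hX.eq_or_eq_of_inter_nonempty (by grind) (by omega) (by omega) h1 with h | h
    · omega
    · refine Or.inl ?_
      rwa [show 1 + 2 + i = 0 + 2 * n by omega, hX.periodic, Set.inter_comm] at h2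

lemma inter_add_two_nonempty_step (hX : IsBipartiteCycle T n X) (hn : 3 ≤ n) (hT : T.IsAcyclic)
    {k : ℕ} (h : (X k ∩ X (k + 2)).Nonempty) : (X (k + 2) ∩ X (k + 4)).Nonempty := by
  obtain ⟨i, hi, h1, h2⟩ := hX.exists_inter_of_inter_nonempty hT (k := k + 2) (d := 2 * n - 4) (by
    rw [show k + 2 + 2 + (2 * n - 4) = k + 2 * n by omega, hX.periodic, Set.inter_comm]
    exact h)
  rcases Nat.even_or_odd i with he | ho
  · rcases hX.eq_or_eq_of_inter_nonempty (by grind) (by omega) (by omega) h2 with h | h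
    · rwa [show i = 0 by omega] at h1
    · omega
  · rcases hX.eq_or_eq_of_inter_nonempty (by grind) (by omega) (by omega) h1 with h | h <;> omega

lemma inter_add_two_nonempty (hX : IsBipartiteCycle T n X) (hn : 3 ≤ n) (hT : T.IsAcyclic)
    {k : ℕ} (h : (X k ∩ X (k + 2)).Nonempty) (t : ℕ) :
    (X (k + 2 * t) ∩ X (k + 2 * t + 2)).Nonempty := by
  induction t with
  | zero => exact h
  | succ t ih => exact hX.inter_add_two_nonempty_step hn hT ih

/-- The subtrees `X (p + 1), X (p + 3), …, X (q - 1)` form a chain joining `X p` to `X q`. -/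
lemma eq_add_two_of_inter_nonempty (hX : IsBipartiteCycle T n X) (hT : T.IsAcyclic) {p q : ℕ}
    (hchain : ∀ t, (X (p + 1 + 2 * t) ∩ X (p + 1 + 2 * t + 2)).Nonempty) (heven : Even (p + q))
    (hpq : p < q) (hqp : q < p + 2 * n) (hmeet : (X p ∩ X q).Nonempty) : q = p + 2 := by
  obtain ⟨d, rfl⟩ : ∃ d, q = p + 1 + 2 * d + 1 := ⟨(q - p - 2) / 2, by grind⟩
  obtain ⟨t, ht, h1, h2⟩ := exists_inter_chain_nonempty hT (hX.connected p).preconnected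
    (hX.connected _).preconnected hmeet (fun _ => hX.connected _) hchain d.zero_le (hX.meet p)
    le_rfl (by rw [Set.inter_comm]; exact hX.meet _)
  rw [Set.inter_comm] at h2
  have hp := hX.eq_or_eq_of_inter_nonempty (by grind) (by omega) (by omega) h1
  have hq := hX.eq_or_eq_of_inter_nonempty (by grind) (by omega) (by omega) h2
  omega

/-- Meeting subtrees `X p` and `X q` would be two apart in both directions around the cycle. -/
lemma disjoint_of_even (hX : IsBipartiteCycle T n X) (hn : 3 ≤ n) (hT : T.IsAcyclic) {p q : ℕ}
    (h : (X (p + 1) ∩ X (p + 3)).Nonempty) (heven : Even (p + q)) (hpq : p < q)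
    (hqp : q < p + 2 * n) : Disjoint (X p) (X q) := by
  by_contra hmeet
  rw [Set.not_disjoint_iff_nonempty_inter] at hmeet
  have hchain := hX.inter_add_two_nonempty hn hT h
  have hq : q = p + 2 := hX.eq_add_two_of_inter_nonempty hT hchain heven hpq hqp hmeet
  have hp : p + 2 * n = q + 2 := by
    refine hX.eq_add_two_of_inter_nonempty hT (fun t => ?_) (by grind) hqp (by omega)
      (by rwa [hX.periodic, Set.inter_comm])
    convert hchain (t + 1) using 3 <;> omega
  omega

lemma disjoint_of_lt (hX : IsBipartiteCycle T n X) (hn : 3 ≤ n) (hT : T.IsAcyclic) {p q : ℕ}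
    (h : (X (p + 1) ∩ X (p + 3)).Nonempty) (hpq : p + 1 < q) (hqp : q + 1 < p + 2 * n) :
    Disjoint (X p) (X q) :=
  (Nat.even_or_odd (p + q)).elim
    (fun heven => hX.disjoint_of_even hn hT h heven (by omega) (by omega))
    (fun hodd => hX.disjoint p q hodd hpq hqp)

theorem le_ncard_treeLeaves {W : Type} [Finite W] {T : SimpleGraph W} {X : ℕ → Set W}
    (hX : IsBipartiteCycle T n X) (hn : 3 ≤ n) (hT : T.IsTree) : n ≤ (treeLeaves T).ncard := by
  obtain ⟨k, hk⟩ : ∃ k, (X k ∩ X (k + 2)).Nonempty :=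
    (hX.inter_add_two_nonempty_or (by omega) hT.isAcyclic).elim (⟨0, ·⟩) (⟨1, ·⟩)
  choose f hf using fun i => Set.nonempty_coe_sort.mp (hX.connected i).nonempty
  have hconn : ∀ p, (T.induce (⋃ t ≤ 2 * n - 4, X (p + t))).Connected := fun p =>
    connected_induce_iUnion_le (fun t => hX.connected (p + t)) (fun t => hX.meet (p + t)) _
  have hcard : Nat.card (Fin n) ≤ (treeLeaves T).ncard := by
    refine card_le_ncard_treeLeaves hT (f := fun i : Fin n => f (k + 2 * i + 1))
      (C := fun i => ⋃ t ≤ 2 * n - 4, X (k + 2 * i + 3 + t)) (fun i => hconn _) ?_ ?_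
    · intro i hi
      obtain ⟨t, ht, hmem⟩ := Set.mem_iUnion₂.mp hi
      have hdisj : Disjoint (X (k + 2 * i + 1)) (X (k + 2 * i + 3 + t)) :=
        hX.disjoint_of_lt hn hT.isAcyclic
          (hX.inter_add_two_nonempty hn hT.isAcyclic hk (i + 1)) (by omega) (by omega)
      exact Set.disjoint_left.mp hdisj (hf _) hmem
    · intro i j hij
      obtain ⟨t, ht, h⟩ : ∃ t ≤ 2 * n - 4, X (k + 2 * i + 3 + t) = X (k + 2 * j + 1) := by
        rcases lt_or_gt_of_ne (Fin.val_ne_of_ne hij) with h | h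
        · exact ⟨2 * (j - i) - 2, by omega, congrArg X (by omega)⟩
        · exact ⟨2 * n - 2 * (i - j) - 2, by omega,
            (congrArg X (by omega)).trans (hX.periodic (k + 2 * j + 1))⟩
      exact Set.mem_iUnion₂.mpr ⟨t, ht, h ▸ hf _⟩
  rwa [Nat.card_fin] at hcard

end IsBipartiteCycle

section CycleDigraph

variable {n : ℕ} [NeZero n]

lemma cnRel_ofNat {a b : ℕ} :
    CnRel n (Fin.ofNat n a) (Fin.ofNat n b) ↔ b ≡ a [MOD n] ∨ b ≡ a + 1 [MOD n] := by
  simp only [CnRel, Fin.ext_iff, Fin.val_ofNat, Nat.ModEq, Nat.mod_add_mod]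

lemma not_cnRel_ofNat {a b : ℕ} (hab : a + 1 < b) (hba : b < a + n) :
    ¬ CnRel n (Fin.ofNat n a) (Fin.ofNat n b) := by
  rw [cnRel_ofNat, not_or]
  constructor <;> intro h
  · have := h.symm.add_le_of_lt (by omega)
    omega
  · have := h.symm.add_le_of_lt hab
    omega

lemma ofNat_add_self (a : ℕ) : Fin.ofNat n (a + n) = Fin.ofNat n a :=
  Fin.ext (Nat.add_mod_right a n)

/-- The sink and source sets of a representation of `C_n` in the cyclic order
`snk 0, src 0, snk 1, src 1, …, snk (n - 1), src (n - 1), snk 0, …`. -/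
def cyclicSets {W : Type} {T : SimpleGraph W} (R : SubtreeRep (CnRel n) T) (k : ℕ) : Set W :=
  if Even k then R.snk (Fin.ofNat n (k / 2)) else R.src (Fin.ofNat n (k / 2))

variable {W : Type} {T : SimpleGraph W} (R : SubtreeRep (CnRel n) T)

lemma cyclicSets_two_mul (i : ℕ) : cyclicSets R (2 * i) = R.snk (Fin.ofNat n i) := by
  simp [cyclicSets]

lemma cyclicSets_two_mul_add_one (i : ℕ) :
    cyclicSets R (2 * i + 1) = R.src (Fin.ofNat n i) := by
  simp [cyclicSets, show (2 * i + 1) / 2 = i by omega]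

lemma cyclicSets_inter_nonempty_iff (i j : ℕ) :
    (cyclicSets R (2 * i + 1) ∩ cyclicSets R (2 * j)).Nonempty ↔
      CnRel n (Fin.ofNat n i) (Fin.ofNat n j) := by
  rw [cyclicSets_two_mul, cyclicSets_two_mul_add_one, R.rep]

lemma periodic_cyclicSets : Function.Periodic (cyclicSets R) (2 * n) := by
  intro k
  obtain ⟨i, rfl | rfl⟩ := Nat.even_or_odd' k
  · rw [← mul_add, cyclicSets_two_mul, cyclicSets_two_mul, ofNat_add_self]
  · rw [add_right_comm, ← mul_add, cyclicSets_two_mul_add_one, cyclicSets_two_mul_add_one,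
      ofNat_add_self]

theorem isBipartiteCycle_cyclicSets : IsBipartiteCycle T n (cyclicSets R) where
  connected k := by
    obtain ⟨i, rfl | rfl⟩ := Nat.even_or_odd' k
    · exact cyclicSets_two_mul R i ▸ R.snk_connected _
    · exact cyclicSets_two_mul_add_one R i ▸ R.src_connected _
  periodic := periodic_cyclicSets R
  meet k := by
    obtain ⟨i, rfl | rfl⟩ := Nat.even_or_odd' k
    · rw [Set.inter_comm, cyclicSets_inter_nonempty_iff, cnRel_ofNat]
      exact Or.inl rfl
    · rw [show 2 * i + 1 + 1 = 2 * (i + 1) by ring, cyclicSets_inter_nonempty_iff, cnRel_ofNat]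
      exact Or.inr rfl
  disjoint p q hodd hpq hqp := by
    rw [Set.disjoint_iff_inter_eq_empty, ← Set.not_nonempty_iff_eq_empty]
    obtain ⟨i, rfl | rfl⟩ := Nat.even_or_odd' p
    · obtain ⟨j, rfl⟩ : ∃ j, q = 2 * j + 1 := ⟨q / 2, by grind⟩
      rw [Set.inter_comm, cyclicSets_inter_nonempty_iff, ← ofNat_add_self i]
      exact not_cnRel_ofNat (by omega) (by omega)
    · obtain ⟨j, rfl⟩ : ∃ j, q = 2 * j := ⟨q / 2, by grind⟩
      rw [cyclicSets_inter_nonempty_iff]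
      exact not_cnRel_ofNat (by omega) (by omega)

end CycleDigraph

section Star

variable {V : Type}

/-- The representation of a digraph in a star with one leaf per vertex. -/
def starSubtreeRep (E : V → V → Prop) : SubtreeRep E (SimpleGraph.starGraph (none : Option V)) where
  src u := insert none (some '' {v | E u v})
  snk v := {some v}
  src_connected u := by
    rw [SimpleGraph.connected_iff_exists_forall_reachable]
    refine ⟨⟨none, Set.mem_insert _ _⟩, fun x => ?_⟩
    by_cases h : (x : Option V) = none
    · rw [show x = ⟨none, Set.mem_insert _ _⟩ from Subtype.ext h]
    · exact SimpleGraph.Adj.reachable (by simp [Ne.symm h])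
  snk_connected v := by
    rw [SimpleGraph.connected_iff_exists_forall_reachable]
    exact ⟨⟨some v, rfl⟩, fun x => by rw [Subsingleton.elim x ⟨some v, rfl⟩]⟩
  rep u v := by
    rw [Set.inter_singleton_nonempty]
    simp

lemma treeLeaves_starGraph (hV : Nat.card V ≠ 1) :
    treeLeaves (SimpleGraph.starGraph (none : Option V)) = Set.range some := by
  ext x
  cases x with
  | none =>
    have hnbhd : (SimpleGraph.starGraph (none : Option V)).neighborSet none = Set.range some := by
      ext y
      cases y <;> simp
    rw [treeLeaves, Set.mem_ofPred_eq, hnbhd,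
      Set.ncard_range_of_injective (Option.some_injective V)]
    simpa using hV
  | some v =>
    have hnbhd : (SimpleGraph.starGraph (none : Option V)).neighborSet (some v) = {none} := by
      ext y
      cases y <;> simp
    simp [treeLeaves, hnbhd]

lemma exists_subtreeRep_ncard_treeLeaves_eq_card [Finite V] (E : V → V → Prop)
    (hV : Nat.card V ≠ 1) :
    ∃ (W : Type) (_ : Fintype W) (T : SimpleGraph W),
      T.IsTree ∧ Nonempty (SubtreeRep E T) ∧ (treeLeaves T).ncard = Nat.card V := by
  refine ⟨Option V, Fintype.ofFinite _, SimpleGraph.starGraph none, SimpleGraph.isTree_starGraph _,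
    ⟨starSubtreeRep E⟩, ?_⟩
  rw [treeLeaves_starGraph hV, Set.ncard_range_of_injective (Option.some_injective V)]

end Star

theorem digLeafage_cnRel {n : ℕ} (hn : 3 ≤ n) : digLeafage (CnRel n) = n := by
  have : NeZero n := ⟨by omega⟩
  have hstar := exists_subtreeRep_ncard_treeLeaves_eq_card (CnRel n)
    (by rw [Nat.card_fin]; omega)
  rw [Nat.card_fin] at hstar
  refine le_antisymm (Nat.sInf_le hstar) (le_csInf ⟨n, hstar⟩ ?_)
  rintro _ ⟨W, _, T, hT, ⟨R⟩, rfl⟩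
  exact (isBipartiteCycle_cyclicSets R).le_ncard_treeLeaves hn hT

section Ferrers

variable {V : Type} {E F : V → V → Prop}

lemma isFerrers_iff :
    IsFerrers F ↔ ∀ u v u' v', F u v → F u' v' → F u v' ∨ F u' v := by
  refine ⟨fun h u v u' v' huv huv' => (h u u').elim (fun hs => Or.inr (hs huv))
    (fun hs => Or.inl (hs huv')), fun h u u' => ?_⟩
  by_contra! hsub
  obtain ⟨v, huv, hv⟩ := Set.not_subset.mp hsub.1
  obtain ⟨v', huv', hv'⟩ := Set.not_subset.mp hsub.2
  exact (h u v u' v' huv huv').elim hv' hv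

lemma IsFerrers.compl (hF : IsFerrers F) : IsFerrers fun u v => ¬ F u v := fun u u' =>
  (hF u' u).imp Set.compl_subset_compl.mpr Set.compl_subset_compl.mpr

lemma exists_ferrers_partition_compl [Finite V] (E : V → V → Prop) :
    ∃ (k : ℕ) (F : Fin k → V → V → Prop), (∀ i, IsFerrers (F i)) ∧
      (∀ i j, i ≠ j → ∀ u v, ¬ (F i u v ∧ F j u v)) ∧ ∀ u v, ¬ E u v ↔ ∃ i, F i u v := by
  obtain ⟨k, ⟨e⟩⟩ := Finite.exists_equiv_fin {p : V × V // ¬ E p.1 p.2}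
  refine ⟨k, fun i u v => (e.symm i : V × V) = (u, v), fun i => ?_, ?_, fun u v => ?_⟩
  · rw [isFerrers_iff]
    intro u v u' v' h h'
    rw [h, Prod.mk.injEq] at h'
    exact Or.inl (h'.2 ▸ h)
  · rintro i j hij u v ⟨hi, hj⟩
    exact hij (e.symm.injective (Subtype.ext (hi.trans hj.symm)))
  · refine ⟨fun h => ⟨e ⟨(u, v), h⟩, congrArg Subtype.val (e.symm_apply_apply _)⟩, ?_⟩
    rintro ⟨i, hi⟩
    have := (e.symm i).2
    rwa [hi] at this

lemma exists_ferrers_inter_of_compl_eq_union {k : ℕ} {F : Fin k → V → V → Prop}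
    (hF : ∀ i, IsFerrers (F i)) (hE : ∀ u v, ¬ E u v ↔ ∃ i, F i u v) :
    ∃ G : Fin k → V → V → Prop, (∀ i, IsFerrers (G i)) ∧ ∀ u v, E u v ↔ ∀ i, G i u v :=
  ⟨fun i u v => ¬ F i u v, fun i => (hF i).compl,
    fun u v => by rw [← not_exists, ← hE, not_not]⟩

theorem ferrersDim_le_fstar [Finite V] (E : V → V → Prop) : ferrersDim E ≤ fstar E := by
  obtain ⟨F, hF, -, hE⟩ := Nat.sInf_mem (exists_ferrers_partition_compl E)
  exact Nat.sInf_le (exists_ferrers_inter_of_compl_eq_union hF hE)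

/-- The conflict graph of the digraph `E`: its vertices are the non-edges of `E`, and two of them
are adjacent when no Ferrers digraph containing `E` avoids both. -/
def conflictGraph (E : V → V → Prop) : SimpleGraph {p : V × V // ¬ E p.1 p.2} where
  Adj p q := E p.1.1 q.1.2 ∧ E q.1.1 p.1.2
  symm := ⟨fun _ _ h => h.symm⟩
  loopless := ⟨fun p h => p.2 h.1⟩

theorem colorable_ferrersDim_conflictGraph [Finite V] (E : V → V → Prop) :
    (conflictGraph E).Colorable (ferrersDim E) := by
  have hne : {k | ∃ F : Fin k → V → V → Prop,
      (∀ i, IsFerrers (F i)) ∧ ∀ u v, E u v ↔ ∀ i, F i u v}.Nonempty := by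
    obtain ⟨k, F, hF, -, hE⟩ := exists_ferrers_partition_compl E
    exact ⟨k, exists_ferrers_inter_of_compl_eq_union hF hE⟩
  obtain ⟨F, hF, hE⟩ := Nat.sInf_mem hne
  have havoid : ∀ p : {p : V × V // ¬ E p.1 p.2}, ∃ i, ¬ F i p.1.1 p.1.2 := fun p =>
    not_forall.mp fun h => p.2 ((hE _ _).mpr h)
  choose c hc using havoid
  refine ⟨SimpleGraph.Coloring.mk c fun {p q} hpq hcolor => ?_⟩
  rcases isFerrers_iff.mp (hF (c p)) _ _ _ _ ((hE _ _).mp hpq.1 _) ((hE _ _).mp hpq.2 _) with h | h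
  · exact hc p h
  · exact hc q (hcolor ▸ h)

end Ferrers

lemma not_colorable_two_conflictGraph_cnRel {n : ℕ} (hn : 3 ≤ n) :
    ¬ (conflictGraph (CnRel n)).Colorable 2 := by
  have : NeZero n := ⟨by omega⟩
  rintro ⟨C⟩
  obtain ⟨d, hd⟩ : ∃ d, 2 * d = n ∨ 2 * d = n + 1 := ⟨(n + 1) / 2, by omega⟩
  have hloop : ∀ a, CnRel n (Fin.ofNat n a) (Fin.ofNat n a) := fun a => Or.inl rfl
  have hsucc : ∀ a, CnRel n (Fin.ofNat n a) (Fin.ofNat n (a + 1)) := fun a =>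
    cnRel_ofNat.mpr (Or.inr rfl)
  let q (i : ℕ) : {p : Fin n × Fin n // ¬ CnRel n p.1 p.2} :=
    ⟨(Fin.ofNat n i, Fin.ofNat n (i + d)), not_cnRel_ofNat (by omega) (by omega)⟩
  let r (i : ℕ) : {p : Fin n × Fin n // ¬ CnRel n p.1 p.2} :=
    ⟨(Fin.ofNat n (i + d), Fin.ofNat n (i + 1)), by
      rw [← ofNat_add_self (i + 1)]
      exact not_cnRel_ofNat (by omega) (by omega)⟩
  have hqr : ∀ i, (conflictGraph (CnRel n)).Adj (q i) (r i) := fun i => ⟨hsucc i, hloop (i + d)⟩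
  have hrq : ∀ i, (conflictGraph (CnRel n)).Adj (r i) (q (i + 1)) := fun i =>
    ⟨cnRel_ofNat.mpr (Or.inr (by rw [add_right_comm])), hloop (i + 1)⟩
  -- `q 0, r 0, q 1, …, r (d - 1), q d` is closed by an edge to an odd cycle.
  have hconst : ∀ i, C (q i) = C (q 0) := by
    intro i
    induction i with
    | zero => rfl
    | succ i ih =>
      have h1 := C.valid (hqr i)
      have h2 := C.valid (hrq i)
      omega
  have hclose : (conflictGraph (CnRel n)).Adj (q 0) (q d) := by
    refine ⟨cnRel_ofNat.mpr (hd.imp (fun h => ?_) (fun h => ?_)),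
      cnRel_ofNat.mpr (Or.inl (by rw [zero_add]))⟩
    · rw [← two_mul, h]
      exact Nat.modEq_zero_iff_dvd.mpr dvd_rfl
    · rw [← two_mul, h, add_comm]
      exact Nat.add_modEq_right
  exact C.valid hclose (hconst d).symm

lemma three_le_ferrersDim_cnRel {n : ℕ} (hn : 3 ≤ n) : 3 ≤ ferrersDim (CnRel n) := by
  by_contra! h
  exact not_colorable_two_conflictGraph_cnRel hn
    ((colorable_ferrersDim_conflictGraph _).mono (by omega))

lemma fstar_cnRel_le_three (n : ℕ) : fstar (CnRel n) ≤ 3 := by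
  let above (u v : Fin n) : Prop := u.val + 1 < v.val
  let below (u v : Fin n) : Prop := v.val < u.val ∧ u.val + 1 < n
  -- The last row is kept apart because it has the edge to vertex `0`.
  let last (u v : Fin n) : Prop := u.val + 1 = n ∧ 0 < v.val ∧ v.val < u.val
  have habove : IsFerrers above := isFerrers_iff.mpr fun u v u' v' h h' => by grind
  have hbelow : IsFerrers below := isFerrers_iff.mpr fun u v u' v' h h' => by grind
  have hlast : IsFerrers last := isFerrers_iff.mpr fun u v u' v' h h' => by grind
  refine Nat.sInf_le ⟨![above, below, last], fun i => ?_, fun i j hij u v => ?_, fun u v => ?_⟩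
  · fin_cases i
    exacts [habove, hbelow, hlast]
  · fin_cases i <;> fin_cases j <;> simp [above, below, last] at hij ⊢ <;> omega
  · have hsucc : (u.val + 1) % n = if u.val + 1 < n then u.val + 1 else 0 := by
      split_ifs with h
      · exact Nat.mod_eq_of_lt h
      · rw [show u.val + 1 = n by omega, Nat.mod_self]
    have hcompl : ¬ CnRel n u v ↔ above u v ∨ below u v ∨ last u v := by
      rw [CnRel, hsucc, Fin.ext_iff]
      grind
    simpa [Fin.exists_fin_succ] using hcompl

/-- For `n ≥ 3`, the digraph `C_n` (directed `n`-cycle plus loops)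
satisfies `l(C_n) = n` and `f(C_n) = f*(C_n) = 3`. -/
theorem stmt_8 (n : ℕ) (hn : 3 ≤ n) :
    digLeafage (CnRel n) = n ∧ ferrersDim (CnRel n) = 3 ∧ fstar (CnRel n) = 3 := by
  have hlower := three_le_ferrersDim_cnRel hn
  have hle := ferrersDim_le_fstar (CnRel n)
  have hupper := fstar_cnRel_le_three n
  exact ⟨digLeafage_cnRel hn, by omega, by omega⟩
end
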